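/- arXiv:1609.07786 — 5 statements merged into one kernel-verified Lean document; each statement's English description precedes it below -/
import Mathlib

section
/- Let N be a positive integer, let Z ⊆ {0,1}^N be a finite nonempty set, let f : Z → {0,1} be non-constant, and let G be an extended learning graph for f with complexity C(G). Then the general adversary bound of f is at most C(G): there exists a family (X_j)_{j∈[N]} of positive semidefinite real matrices with rows and columns indexed by Z such that Σ_{j : x_j ≠ y_j} X_j[x,y] = 1 for all x, y ∈ Z with f(x) ≠ f(y), and max_{z∈Z} Σ_{j∈[N]} X_j[z,z] ≤ C(G). -/
/-- An *extended learning graph* for a function `f : Z → {0,1}` on a set of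
inputs `Z ⊆ {0,1}^N`.  It consists of a finite directed acyclic graph rooted at
`root` (acyclicity is forced by the labelling: along each edge the label grows
by exactly one index), a labelling `S` of the vertices by subsets of `[N]` with
`S root = ∅`, nonnegative weights `w z b e` (for each input `z`, bit `b` and
edge `e`) that depend on `z` only through its restriction to `S e.2` and that
satisfy the compatibility condition between negative and positive instances,
and, for every positive input `y`, a unit flow `p y` sourced at the root,
vanishing on edges of zero positive weight, whose sinks are labelled by
1-certificates for `f` on `y`. -/
structure ExtendedLearningGraph (N : ℕ) (Z : Finset (Fin N → Bool))
    (f : (Fin N → Bool) → Bool) where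
  /-- number of vertices; the vertex set is `Fin n`. -/
  n : ℕ
  /-- the set of (directed) edges -/
  E : Finset (Fin n × Fin n)
  /-- the root -/
  root : Fin n
  /-- the labelling of vertices by subsets of `[N]` -/
  S : Fin n → Finset (Fin N)
  S_root : S root = ∅
  /-- along each edge the label grows by exactly one new index (this also
  forces the graph to be acyclic) -/
  S_edge : ∀ e ∈ E, ∃ j ∉ S e.1, S e.2 = insert j (S e.1)
  /-- the graph is rooted at `root`: every vertex is reachable from it -/
  reach : ∀ v : Fin n, Relation.ReflTransGen (fun u v => (u, v) ∈ E) root v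
  /-- the weights `w z b e` -/
  w : (Fin N → Bool) → Bool → Fin n × Fin n → ℝ
  w_nonneg : ∀ z b e, 0 ≤ w z b e
  /-- `w z b e` depends on `z` only through the restriction of `z` to `S e.2` -/
  w_local : ∀ z z' b, ∀ e ∈ E, (∀ j ∈ S e.2, z j = z' j) → w z b e = w z' b e
  /-- compatibility: `w x 0 e = w y 1 e` whenever the negative instance `x` and
  the positive instance `y` agree on `S e.1` and differ on the loaded index -/
  w_compat : ∀ x ∈ Z, ∀ y ∈ Z, f x = false → f y = true → ∀ e ∈ E,
      (∀ j ∈ S e.1, x j = y j) →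
      (∃ j ∉ S e.1, S e.2 = insert j (S e.1) ∧ x j ≠ y j) →
      w x false e = w y true e
  /-- the flows `p y` for positive instances `y` -/
  p : (Fin N → Bool) → Fin n × Fin n → ℝ
  p_nonneg : ∀ y e, 0 ≤ p y e
  /-- `p y` is a unit flow: the net outflow from the root is `1` -/
  p_root : ∀ y ∈ Z, f y = true →
      (∑ e ∈ E.filter fun e => e.1 = root, p y e)
        - (∑ e ∈ E.filter fun e => e.2 = root, p y e) = 1
  /-- flow conservation at every vertex other than the root and the sinks of
  the flow (a sink being a vertex with no outgoing flow) -/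
  p_conserve : ∀ y ∈ Z, f y = true → ∀ v : Fin n, v ≠ root →
      (∑ e ∈ E.filter fun e => e.1 = v, p y e) ≠ 0 →
      (∑ e ∈ E.filter fun e => e.1 = v, p y e)
        = (∑ e ∈ E.filter fun e => e.2 = v, p y e)
  /-- every sink of the flow `p y` (a vertex with positive incoming flow and no
  outgoing flow) is labelled by a `1`-certificate for `f` on `y` -/
  p_sink_cert : ∀ y ∈ Z, f y = true → ∀ v : Fin n,
      (∑ e ∈ E.filter fun e => e.2 = v, p y e) ≠ 0 →
      (∑ e ∈ E.filter fun e => e.1 = v, p y e) = 0 →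
      ∀ z ∈ Z, (∀ j ∈ S v, z j = y j) → f z = true
  /-- the flow vanishes on edges with zero positive weight -/
  p_zero : ∀ y ∈ Z, f y = true → ∀ e ∈ E, w y true e = 0 → p y e = 0

namespace ExtendedLearningGraph

variable {N : ℕ} {Z : Finset (Fin N → Bool)} {f : (Fin N → Bool) → Bool}

/-- The negative complexity `C^0(G, x) = Σ_{e ∈ E} w_x^0(e)`. -/
noncomputable def negComplexity (G : ExtendedLearningGraph N Z f)
    (x : Fin N → Bool) : ℝ :=
  ∑ e ∈ G.E, G.w x false e

/-- The positive complexity `C^1(G, y) = Σ_{e ∈ E} p_y(e)² / w_y^1(e)` (with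
the convention that a term with `p_y(e) = 0` equals `0`; recall that in Lean
division by zero yields zero, and `p_y(e) ≠ 0` forces `w_y^1(e) ≠ 0`). -/
noncomputable def posComplexity (G : ExtendedLearningGraph N Z f)
    (y : Fin N → Bool) : ℝ :=
  ∑ e ∈ G.E, (G.p y e) ^ 2 / G.w y true e

end ExtendedLearningGraph

namespace ExtendedLearningGraph

variable {N : ℕ} {Z : Finset (Fin N → Bool)} {f : (Fin N → Bool) → Bool}

open Classical in
theorem cut_flow (G : ExtendedLearningGraph N Z f) (x y : Fin N → Bool)
    (hx : x ∈ Z) (hy : y ∈ Z) (fx : f x = false) (fy : f y = true) :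
    ∑ e ∈ G.E, (if (∀ i ∈ G.S e.1, x i = y i) ∧ ¬ (∀ i ∈ G.S e.2, x i = y i)
      then G.p y e else 0) = 1 := by
  set A : Finset (Fin G.n) := Finset.univ.filter (fun v => ∀ i ∈ G.S v, x i = y i) with hA
  have key : ∑ v ∈ A, ((∑ e ∈ G.E.filter (fun e => e.1 = v), G.p y e)
      - ∑ e ∈ G.E.filter (fun e => e.2 = v), G.p y e) = 1 := by
    rw [Finset.sum_eq_single_of_mem G.root]
    · exact G.p_root y hy fy
    · simp [hA, G.S_root]
    · intro v hv hne
      by_cases h0 : (∑ e ∈ G.E.filter fun e => e.1 = v, G.p y e) = 0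
      · by_cases h1 : (∑ e ∈ G.E.filter fun e => e.2 = v, G.p y e) = 0
        · rw [h0, h1, sub_zero]
        · have := G.p_sink_cert y hy fy v h1 h0 x hx (by simpa [hA] using hv)
          rw [fx] at this
          cases this
      · rw [← G.p_conserve y hy fy v hne h0, sub_self]
  rw [← key, Finset.sum_sub_distrib]
  simp only [Finset.sum_filter]
  rw [Finset.sum_comm, Finset.sum_comm (s := A), ← Finset.sum_sub_distrib]
  refine Finset.sum_congr rfl fun e he => ?_
  rw [Finset.sum_ite_eq, Finset.sum_ite_eq]
  obtain ⟨j, hj, hS⟩ := G.S_edge e he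
  have hmono : (∀ i ∈ G.S e.2, x i = y i) → (∀ i ∈ G.S e.1, x i = y i) := by
    intro h i hi
    exact h i (by rw [hS]; exact Finset.mem_insert_of_mem hi)
  simp only [hA, Finset.mem_filter, Finset.mem_univ, true_and]
  by_cases h1 : ∀ i ∈ G.S e.1, x i = y i <;> by_cases h2 : ∀ i ∈ G.S e.2, x i = y i
  · simp only [if_pos h1, if_pos h2]; rw [if_neg (fun h => h.2 h2)]; ring
  · simp only [if_pos h1, if_neg h2]; rw [if_pos ⟨h1, h2⟩]; ring
  · exact absurd (hmono h2) h1
  · simp only [if_neg h1, if_neg h2]; rw [if_neg (fun h => h1 h.1)]; ring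

/-- The (scaled) amplitude. -/
noncomputable def phi (G : ExtendedLearningGraph N Z f) (s : ℝ) (e : Fin G.n × Fin G.n)
    (z : Fin N → Bool) : ℝ :=
  if f z = true then G.p z e / Real.sqrt (G.w z true e) / s else Real.sqrt (G.w z false e) * s

/-- The block key. -/
def key (G : ExtendedLearningGraph N Z f) (j : Fin N) (e : Fin G.n × Fin G.n)
    (z : Fin N → Bool) : (Fin N → Bool) × Bool :=
  (fun i => if i ∈ G.S e.1 then z i else false, xor (z j) (f z))

/-- The edges loading `j`. -/
def load (G : ExtendedLearningGraph N Z f) (j : Fin N) : Finset (Fin G.n × Fin G.n) :=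
  G.E.filter (fun e => j ∉ G.S e.1 ∧ G.S e.2 = insert j (G.S e.1))

/-- The adversary matrices. -/
noncomputable def XX (G : ExtendedLearningGraph N Z f) (s : ℝ) (j : Fin N) : Matrix Z Z ℝ :=
  ∑ e ∈ G.load j, ∑ k : (Fin N → Bool) × Bool,
    Matrix.vecMulVec (fun z : Z => if G.key j e z.1 = k then G.phi s e z.1 else 0)
      (star (fun z : Z => if G.key j e z.1 = k then G.phi s e z.1 else 0))

theorem XX_psd (G : ExtendedLearningGraph N Z f) (s : ℝ) (j : Fin N) :
    (G.XX s j).PosSemidef := by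
  refine Matrix.posSemidef_sum _ fun e _ => Matrix.posSemidef_sum _ fun k _ => ?_
  exact Matrix.posSemidef_vecMulVec_self_star _

theorem XX_apply (G : ExtendedLearningGraph N Z f) (s : ℝ) (j : Fin N) (x y : Z) :
    G.XX s j x y = ∑ e ∈ G.load j,
      if G.key j e x.1 = G.key j e y.1 then G.phi s e x.1 * G.phi s e y.1 else 0 := by
  unfold XX
  rw [Matrix.sum_apply]
  refine Finset.sum_congr rfl fun e _ => ?_
  rw [Matrix.sum_apply]
  simp only [Matrix.vecMulVec_apply, Pi.star_apply, star_trivial, ite_mul, zero_mul]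
  rw [Finset.sum_ite_eq]
  simp [eq_comm]

theorem sum_load (G : ExtendedLearningGraph N Z f) (F : Fin N → Fin G.n × Fin G.n → ℝ)
    (H : Fin G.n × Fin G.n → ℝ)
    (h : ∀ e ∈ G.E, ∀ j, j ∉ G.S e.1 → G.S e.2 = insert j (G.S e.1) → F j e = H e) :
    ∑ j, ∑ e ∈ G.load j, F j e = ∑ e ∈ G.E, H e := by
  unfold load
  simp only [Finset.sum_filter]
  rw [Finset.sum_comm]
  refine Finset.sum_congr rfl fun e he => ?_
  obtain ⟨j, hj, hS⟩ := G.S_edge e he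
  rw [Finset.sum_eq_single j]
  · rw [if_pos ⟨hj, hS⟩, h e he j hj hS]
  · intro i _ hij
    rw [if_neg]
    rintro ⟨hi, hSi⟩
    have : i ∈ G.S e.2 := by rw [hSi]; exact Finset.mem_insert_self _ _
    rw [hS, Finset.mem_insert] at this
    exact this.elim hij hi
  · simp

theorem XX_diag (G : ExtendedLearningGraph N Z f) (s : ℝ) (z : Z) :
    ∑ j, G.XX s j z z = ∑ e ∈ G.E, G.phi s e z.1 ^ 2 := by
  simp only [XX_apply, if_true]
  exact G.sum_load _ _ fun e _ j _ _ => (sq _).symm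

theorem XX_off (G : ExtendedLearningGraph N Z f) (s : ℝ) (hs : s ≠ 0) (x y : Z)
    (fx : f x.1 = false) (fy : f y.1 = true) :
    ∑ j ∈ Finset.univ.filter (fun j : Fin N => x.1 j ≠ y.1 j), G.XX s j x y = 1 := by
  classical
  rw [← G.cut_flow x.1 y.1 x.2 y.2 fx fy, Finset.sum_filter]
  simp only [XX_apply]
  have : ∀ j, (if x.1 j ≠ y.1 j then ∑ e ∈ G.load j,
      (if G.key j e x.1 = G.key j e y.1 then G.phi s e x.1 * G.phi s e y.1 else 0) else 0)
      = ∑ e ∈ G.load j, if x.1 j ≠ y.1 j then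
      (if G.key j e x.1 = G.key j e y.1 then G.phi s e x.1 * G.phi s e y.1 else 0) else 0 := by
    intro j; split_ifs <;> simp
  simp only [this]
  refine G.sum_load _ _ fun e he j hj hS => ?_
  have hagree : (∀ i ∈ G.S e.2, x.1 i = y.1 i) ↔
      (x.1 j = y.1 j ∧ ∀ i ∈ G.S e.1, x.1 i = y.1 i) := by
    rw [hS]; simp
  by_cases hxy : x.1 j = y.1 j
  · rw [if_neg (by simpa using hxy), if_neg]
    rintro ⟨h1, h2⟩
    exact h2 (hagree.2 ⟨hxy, h1⟩)
  · rw [if_pos hxy]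
    have hk : G.key j e x.1 = G.key j e y.1 ↔ ∀ i ∈ G.S e.1, x.1 i = y.1 i := by
      unfold key
      rw [Prod.mk.injEq, funext_iff, fx, fy]
      constructor
      · rintro ⟨h, _⟩ i hi
        simpa [hi] using h i
      · intro h
        refine ⟨fun i => ?_, ?_⟩
        · by_cases hi : i ∈ G.S e.1
          · simp [hi, h i hi]
          · simp [hi]
        · revert hxy
          cases x.1 j <;> cases y.1 j <;> simp
    by_cases h1 : ∀ i ∈ G.S e.1, x.1 i = y.1 i
    · rw [if_pos (hk.2 h1), if_pos ⟨h1, fun h => hxy (hagree.1 h).1⟩]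
      have hw := G.w_compat x.1 x.2 y.1 y.2 fx fy e he h1 ⟨j, hj, hS, hxy⟩
      unfold phi
      rw [if_neg (by simp [fx]), if_pos fy, hw]
      by_cases h0 : G.w y.1 true e = 0
      · rw [G.p_zero y.1 y.2 fy e he h0]; simp
      · have : Real.sqrt (G.w y.1 true e) ≠ 0 :=
          (Real.sqrt_pos.2 (lt_of_le_of_ne (G.w_nonneg _ _ _) (Ne.symm h0))).ne'
        field_simp
    · rw [if_neg (fun h => h1 (hk.1 h)), if_neg (fun h => h1 h.1)]

theorem diag_neg (G : ExtendedLearningGraph N Z f) (s : ℝ) (x : Fin N → Bool)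
    (fx : f x = false) : ∑ e ∈ G.E, G.phi s e x ^ 2 = G.negComplexity x * s ^ 2 := by
  unfold negComplexity
  rw [Finset.sum_mul]
  refine Finset.sum_congr rfl fun e _ => ?_
  unfold phi
  rw [if_neg (by simp [fx]), mul_pow, Real.sq_sqrt (G.w_nonneg _ _ _)]

theorem diag_pos (G : ExtendedLearningGraph N Z f) (s : ℝ) (y : Fin N → Bool)
    (fy : f y = true) : ∑ e ∈ G.E, G.phi s e y ^ 2 = G.posComplexity y / s ^ 2 := by
  unfold posComplexity
  rw [Finset.sum_div]
  refine Finset.sum_congr rfl fun e _ => ?_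
  unfold phi
  rw [if_pos fy, div_pow, div_pow, Real.sq_sqrt (G.w_nonneg _ _ _)]

theorem off_zero (G : ExtendedLearningGraph N Z f) (x y : Z)
    (fx : f x.1 = false) (fy : f y.1 = true)
    (h : ∀ e ∈ G.E, G.phi 1 e x.1 * G.phi 1 e y.1 = 0) : False := by
  have h1 := G.XX_off 1 one_ne_zero x y fx fy
  rw [Finset.sum_eq_zero] at h1
  · exact zero_ne_one h1
  · intro j _
    rw [XX_apply]
    refine Finset.sum_eq_zero fun e he => ?_
    rw [h e (Finset.mem_filter.1 he).1, ite_self]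

end ExtendedLearningGraph

/-- Let `Z ⊆ {0,1}^N` be nonempty, `f : Z → {0,1}`
non-constant, and `G` an extended learning graph for `f` with negative
complexity at most `C0m` on every negative instance and positive complexity at
most `C1m` on every positive instance (so that its complexity
`C(G) = √(C⁰(G)·C¹(G))` is at most `√(C0m·C1m)`).  Then the general adversary
bound of `f` is at most `√(C0m·C1m)`: there is a family `(X_j)_{j∈[N]}` of
positive semidefinite real matrices indexed by `Z` with
`Σ_{j : x_j ≠ y_j} X_j[x,y] = 1` whenever `f(x) ≠ f(y)`, and
`Σ_{j∈[N]} X_j[z,z] ≤ √(C0m·C1m)` for every `z ∈ Z`. -/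
theorem stmt_0 (N : ℕ) (hN : 0 < N) (Z : Finset (Fin N → Bool))
    (f : (Fin N → Bool) → Bool)
    (hneg : ∃ x ∈ Z, f x = false) (hpos : ∃ y ∈ Z, f y = true)
    (G : ExtendedLearningGraph N Z f) (C0m C1m : ℝ)
    (hC0 : ∀ x ∈ Z, f x = false → G.negComplexity x ≤ C0m)
    (hC1 : ∀ y ∈ Z, f y = true → G.posComplexity y ≤ C1m) :
    ∃ X : Fin N → Matrix Z Z ℝ,
      (∀ j, (X j).PosSemidef) ∧
      (∀ x y : Z, f x.1 ≠ f y.1 →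
        ∑ j ∈ Finset.univ.filter (fun j : Fin N => x.1 j ≠ y.1 j), X j x y = 1) ∧
      (∀ z : Z, ∑ j, X j z z ≤ Real.sqrt (C0m * C1m)) := by
  obtain ⟨x0, hx0, fx0⟩ := hneg
  obtain ⟨y0, hy0, fy0⟩ := hpos
  have hp0 : 0 < C0m := by
    by_contra hc
    have h1 := G.diag_neg 1 x0 fx0
    have h2 := hC0 x0 hx0 fx0
    have h3 : ∑ e ∈ G.E, G.phi 1 e x0 ^ 2 = 0 :=
      le_antisymm (by rw [h1]; linarith) (Finset.sum_nonneg fun e _ => sq_nonneg _)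
    rw [Finset.sum_eq_zero_iff_of_nonneg (fun e _ => sq_nonneg _)] at h3
    refine G.off_zero ⟨x0, hx0⟩ ⟨y0, hy0⟩ fx0 fy0 fun e he => ?_
    have := pow_eq_zero_iff (two_ne_zero) |>.1 (h3 e he)
    simp [this]
  have hp1 : 0 < C1m := by
    by_contra hc
    have h1 := G.diag_pos 1 y0 fy0
    have h2 := hC1 y0 hy0 fy0
    have h3 : ∑ e ∈ G.E, G.phi 1 e y0 ^ 2 = 0 :=
      le_antisymm (by rw [h1]; linarith) (Finset.sum_nonneg fun e _ => sq_nonneg _)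
    rw [Finset.sum_eq_zero_iff_of_nonneg (fun e _ => sq_nonneg _)] at h3
    refine G.off_zero ⟨x0, hx0⟩ ⟨y0, hy0⟩ fx0 fy0 fun e he => ?_
    have := pow_eq_zero_iff (two_ne_zero) |>.1 (h3 e he)
    simp [this]
  have ha : 0 < Real.sqrt C0m := Real.sqrt_pos.2 hp0
  have hb : 0 < Real.sqrt C1m := Real.sqrt_pos.2 hp1
  have ha2 : Real.sqrt C0m ^ 2 = C0m := Real.sq_sqrt hp0.le
  have hb2 : Real.sqrt C1m ^ 2 = C1m := Real.sq_sqrt hp1.le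
  have hmul : Real.sqrt (C0m * C1m) = Real.sqrt C0m * Real.sqrt C1m := Real.sqrt_mul hp0.le _
  have hq : 0 < Real.sqrt C1m / Real.sqrt C0m := div_pos hb ha
  set s := Real.sqrt (Real.sqrt C1m / Real.sqrt C0m) with hs
  have hs2 : s ^ 2 = Real.sqrt C1m / Real.sqrt C0m := Real.sq_sqrt hq.le
  have hs0 : s ≠ 0 := (Real.sqrt_pos.2 hq).ne'
  refine ⟨G.XX s, G.XX_psd s, ?_, ?_⟩
  · intro x y hxy
    cases fx : f x.1
    · have fy : f y.1 = true := by rw [fx] at hxy; simpa using hxy.symm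
      exact G.XX_off s hs0 x y fx fy
    · have fy : f y.1 = false := by rw [fx] at hxy; simpa using hxy.symm
      rw [← G.XX_off s hs0 y x fy fx]
      refine Finset.sum_congr (by ext j; simp [eq_comm]) fun j _ => ?_
      rw [G.XX_apply, G.XX_apply]
      refine Finset.sum_congr rfl fun e _ => ?_
      rw [mul_comm]
      simp only [eq_comm]
  · intro z
    rw [G.XX_diag, hmul]
    cases fz : f z.1
    · rw [G.diag_neg s z.1 fz, hs2]
      calc _ ≤ C0m * (Real.sqrt C1m / Real.sqrt C0m) :=
            mul_le_mul_of_nonneg_right (hC0 z.1 z.2 fz) hq.le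
        _ = _ := by
            nth_rewrite 1 [← ha2]
            field_simp
    · rw [G.diag_pos s z.1 fz, hs2]
      calc _ ≤ C1m / (Real.sqrt C1m / Real.sqrt C0m) :=
            div_le_div_of_nonneg_right (hC1 z.1 z.2 fz) hq.le
        _ = _ := by
            nth_rewrite 1 [← hb2]
            field_simp
end

section
/- Let N, n be positive integers, let Z ⊆ {0,1}^N be finite, let f_1, …, f_n : Z → {0,1} be functions with respective extended learning graphs G_1, …, G_n, and let f = f_1 ∨ … ∨ f_n. Let k ≥ 1 and assume that for every x ∈ Z with f(x) = 1 there are at least k indices i with f_i(x) = 1. Then there exists an extended learning graph G for f such that: for every z ∈ Z with f(z) = 0, C^0(G, z) ≤ (n/k) · (1/n) Σ_{i=1}^n C^0(G_i, z) · C^1(G_i), and for every z ∈ Z with f(z) = 1, C^1(G, z) ≤ 1. -/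
section Helper
open Classical

/-- sum of `F` over the `t` satisfying `P`. -/
noncomputable def elg_sum {T : Type} [Fintype T] (P : T → Prop) (F : T → ℝ) : ℝ :=
  ∑ t, if P t then F t else 0

theorem elg_sum_eq {T : Type} [Fintype T] (P : T → Prop) [DecidablePred P] (F : T → ℝ) :
    elg_sum P F = ∑ t, if P t then F t else 0 := by
  unfold elg_sum
  refine Finset.sum_congr rfl fun t _ => ?_
  by_cases h : P t <;> simp [h]

theorem elg_build (N : ℕ) (Z : Finset (Fin N → Bool)) (f : (Fin N → Bool) → Bool)
    {V T : Type} [Fintype V] [Fintype T] (src tgt : T → V)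
    (hinj : Function.Injective (fun t => (src t, tgt t)))
    (root : V) (S : V → Finset (Fin N)) (S_root : S root = ∅)
    (S_edge : ∀ t, ∃ j ∉ S (src t), S (tgt t) = insert j (S (src t)))
    (reach : ∀ v : V, Relation.ReflTransGen (fun u v => ∃ t, src t = u ∧ tgt t = v) root v)
    (w : (Fin N → Bool) → Bool → T → ℝ) (w_nonneg : ∀ z b e, 0 ≤ w z b e)
    (w_local : ∀ z z' b t, (∀ j ∈ S (tgt t), z j = z' j) → w z b t = w z' b t)
    (w_compat : ∀ x ∈ Z, ∀ y ∈ Z, f x = false → f y = true → ∀ t,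
      (∀ j ∈ S (src t), x j = y j) →
      (∃ j ∉ S (src t), S (tgt t) = insert j (S (src t)) ∧ x j ≠ y j) →
      w x false t = w y true t)
    (p : (Fin N → Bool) → T → ℝ) (p_nonneg : ∀ y e, 0 ≤ p y e)
    (p_root : ∀ y ∈ Z, f y = true →
      (elg_sum (fun t => src t = root) (p y)) - (elg_sum (fun t => tgt t = root) (p y)) = 1)
    (p_conserve : ∀ y ∈ Z, f y = true → ∀ v, v ≠ root →
      (elg_sum (fun t => src t = v) (p y)) ≠ 0 →
      (elg_sum (fun t => src t = v) (p y)) = (elg_sum (fun t => tgt t = v) (p y)))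
    (p_sink_cert : ∀ y ∈ Z, f y = true → ∀ v,
      (elg_sum (fun t => tgt t = v) (p y)) ≠ 0 →
      (elg_sum (fun t => src t = v) (p y)) = 0 →
      ∀ z ∈ Z, (∀ j ∈ S v, z j = y j) → f z = true)
    (p_zero : ∀ y ∈ Z, f y = true → ∀ t, w y true t = 0 → p y t = 0) :
    ∃ G : ExtendedLearningGraph N Z f,
      (∀ x, G.negComplexity x = ∑ t, w x false t) ∧
      (∀ y, G.posComplexity y = ∑ t, (p y t) ^ 2 / w y true t) := by
  let g : V ≃ Fin (Fintype.card V) := Fintype.equivFin V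
  let Φ : T → Fin (Fintype.card V) × Fin (Fintype.card V) := fun t => (g (src t), g (tgt t))
  have hΦ : Function.Injective Φ := by
    intro a b h
    apply hinj
    simp only [Φ, Prod.mk.injEq, g.injective.eq_iff] at h
    simp [h.1, h.2]
  have ext0 : ∀ (F : T → ℝ), (∀ t, 0 ≤ F t) → ∀ e, 0 ≤ Function.extend Φ F 0 e := by
    intro F hF e
    by_cases h : ∃ t, Φ t = e
    · obtain ⟨t, rfl⟩ := h
      rw [hΦ.extend_apply]; exact hF t
    · rw [Function.extend_apply' _ _ _ h]; simp
  have sumE : ∀ F : Fin (Fintype.card V) × Fin (Fintype.card V) → ℝ,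
      ∑ e ∈ Finset.univ.image Φ, F e = ∑ t, F (Φ t) := by
    intro F
    rw [Finset.sum_image (fun a _ b _ h => hΦ h)]
  have sum1 : ∀ (F : T → ℝ) (v : Fin (Fintype.card V)),
      ∑ e ∈ (Finset.univ.image Φ).filter (fun e => e.1 = v), Function.extend Φ F 0 e
        = elg_sum (fun t => src t = g.symm v) (F) := by
    intro F v
    rw [Finset.sum_filter, sumE, elg_sum_eq]
    refine Finset.sum_congr rfl fun t _ => ?_
    rw [hΦ.extend_apply]
    simp only [Φ, Equiv.eq_symm_apply]
  have sum2 : ∀ (F : T → ℝ) (v : Fin (Fintype.card V)),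
      ∑ e ∈ (Finset.univ.image Φ).filter (fun e => e.2 = v), Function.extend Φ F 0 e
        = elg_sum (fun t => tgt t = g.symm v) (F) := by
    intro F v
    rw [Finset.sum_filter, sumE, elg_sum_eq]
    refine Finset.sum_congr rfl fun t _ => ?_
    rw [hΦ.extend_apply]
    simp only [Φ, Equiv.eq_symm_apply]
  have allE : ∀ P : Fin (Fintype.card V) × Fin (Fintype.card V) → Prop,
      (∀ t, P (Φ t)) → ∀ e ∈ Finset.univ.image Φ, P e := by
    intro P h e he
    obtain ⟨t, _, rfl⟩ := Finset.mem_image.1 he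
    exact h t
  let G : ExtendedLearningGraph N Z f :=
    { n := Fintype.card V
      E := Finset.univ.image Φ
      root := g root
      S := fun v => S (g.symm v)
      S_root := by simpa using S_root
      S_edge := by
        apply allE
        intro t
        simpa [Φ] using S_edge t
      reach := by
        intro v
        have h := (reach (g.symm v)).lift (p := fun u v => (u, v) ∈ Finset.univ.image Φ) g (by
          rintro a b ⟨t, rfl, rfl⟩
          exact Finset.mem_image.2 ⟨t, Finset.mem_univ _, rfl⟩)
        have h' : Relation.ReflTransGen (fun u v => (u, v) ∈ Finset.univ.image Φ) (g root)
            (g (g.symm v)) := h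
        rwa [Equiv.apply_symm_apply] at h'
      w := fun z b => Function.extend Φ (w z b) 0
      w_nonneg := fun z b => ext0 _ (w_nonneg z b)
      w_local := by
        intro z z' b
        apply allE
        intro t h
        rw [hΦ.extend_apply, hΦ.extend_apply]
        exact w_local z z' b t (by simpa [Φ] using h)
      w_compat := by
        intro x hx y hy fx fy
        apply allE
        intro t h1 h2
        rw [hΦ.extend_apply, hΦ.extend_apply]
        exact w_compat x hx y hy fx fy t (by simpa [Φ] using h1) (by simpa [Φ] using h2)
      p := fun y => Function.extend Φ (p y) 0
      p_nonneg := fun y => ext0 _ (p_nonneg y)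
      p_root := by
        intro y hy fy
        rw [sum1, sum2]
        simpa using p_root y hy fy
      p_conserve := by
        intro y hy fy v hv
        rw [sum1, sum2]
        exact p_conserve y hy fy _ (by intro h; apply hv; rw [← h]; simp)
      p_sink_cert := by
        intro y hy fy v
        rw [sum1, sum2]
        exact p_sink_cert y hy fy _
      p_zero := by
        intro y hy fy
        apply allE
        intro t
        rw [hΦ.extend_apply, hΦ.extend_apply]
        exact p_zero y hy fy t }
  refine ⟨G, ?_, ?_⟩
  · intro x
    show ∑ e ∈ Finset.univ.image Φ, Function.extend Φ (w x false) 0 e = _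
    rw [sumE]
    exact Finset.sum_congr rfl fun t _ => hΦ.extend_apply _ _ _
  · intro y
    show ∑ e ∈ Finset.univ.image Φ,
      (Function.extend Φ (p y) 0 e) ^ 2 / Function.extend Φ (w y true) 0 e = _
    rw [sumE]
    exact Finset.sum_congr rfl fun t _ => by rw [hΦ.extend_apply, hΦ.extend_apply]

/-- flip the bits outside `A`. -/
def elg_flip {N : ℕ} (A : Finset (Fin N)) (z : Fin N → Bool) : Fin N → Bool :=
  fun l => if l ∈ A then z l else !(z l)

theorem elg_bool : ∀ a b : Bool, a ≠ b → a = !b := by decide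

end Helper

set_option maxHeartbeats 1000000 in
/-- **learning graph for OR.** Let `f₁, …, f_n : Z → {0,1}` have
extended learning graphs `G₁, …, G_n`, and let `f = f₁ ∨ … ∨ f_n`.  Assume that
for every `x ∈ Z` with `f(x) = 1` at least `k ≥ 1` of the indices `i` satisfy
`f_i(x) = 1`, and let `C1 i` be a nonnegative upper bound on the positive
complexity `C¹(G_i)` of `G_i`.  Then there is an extended learning graph `G`
for `f` such that `C⁰(G, z) ≤ (n/k) · (1/n) Σ_i C⁰(G_i, z)·C1 i` for every
negative instance `z`, and `C¹(G, z) ≤ 1` for every positive instance `z`. -/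
theorem stmt_1 (N n : ℕ) (hN : 0 < N) (hn : 0 < n)
    (Z : Finset (Fin N → Bool))
    (f : Fin n → (Fin N → Bool) → Bool)
    (G : ∀ i : Fin n, ExtendedLearningGraph N Z (f i))
    (k : ℕ) (hk : 1 ≤ k)
    (hcount : ∀ x ∈ Z, (∃ i, f i x = true) →
      k ≤ (Finset.univ.filter fun i : Fin n => f i x = true).card)
    (C1 : Fin n → ℝ) (hC1nonneg : ∀ i, 0 ≤ C1 i)
    (hC1 : ∀ i, ∀ y ∈ Z, f i y = true → (G i).posComplexity y ≤ C1 i) :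
    ∃ Gor : ExtendedLearningGraph N Z (fun z => decide (∃ i, f i z = true)),
      (∀ z ∈ Z, (¬ ∃ i, f i z = true) →
        Gor.negComplexity z ≤
          ((n : ℝ) / k) * ((1 / n) * ∑ i, (G i).negComplexity z * C1 i)) ∧
      (∀ z ∈ Z, (∃ i, f i z = true) → Gor.posComplexity z ≤ 1) := by
  classical
  have hk0 : (0 : ℝ) < k := by exact_mod_cast hk
  have hn0 : (0 : ℝ) < n := by exact_mod_cast hn
  let V : Type := Option (Σ i : Fin n, {v : Fin (G i).n // v ≠ (G i).root})
  let T : Type := Σ i : Fin n, {e : Fin (G i).n × Fin (G i).n // e ∈ (G i).E}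
  let φ : ∀ i : Fin n, Fin (G i).n → V := fun i v =>
    if h : v = (G i).root then none else some ⟨i, v, h⟩
  have φroot : ∀ i, φ i (G i).root = none := fun i => by simp [φ]
  have φnone : ∀ i v, φ i v = none ↔ v = (G i).root := by
    intro i v
    by_cases h : v = (G i).root <;> simp [φ, h]
  have φsome : ∀ i v (u : {v : Fin (G i).n // v ≠ (G i).root}),
      φ i v = some ⟨i, u⟩ ↔ v = u.1 := by
    intro i v u
    by_cases h : v = (G i).root
    · subst h
      rw [φroot]
      constructor
      · intro h; exact absurd h (by simp)
      · intro h; exact absurd h.symm u.2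
    · have e0 : φ i v = some ⟨i, v, h⟩ := dif_neg h
      rw [e0]
      constructor
      · intro h'
        have h1 := eq_of_heq (Sigma.mk.inj (Option.some.inj h')).2
        exact congrArg Subtype.val h1
      · intro h'
        subst h'
        rfl
  have φne : ∀ i j v (u : {v : Fin (G i).n // v ≠ (G i).root}), j ≠ i →
      φ j v ≠ some ⟨i, u⟩ := by
    intro i j v u hji h
    by_cases hv : v = (G j).root
    · subst hv
      rw [φroot] at h
      exact absurd h (by simp)
    · have e0 : φ j v = some ⟨j, v, hv⟩ := dif_neg hv
      rw [e0] at h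
      exact hji (Sigma.mk.inj (Option.some.inj h)).1
  have φinj : ∀ i, Function.Injective (φ i) := by
    intro i a b h
    by_cases hb : b = (G i).root
    · rw [hb, φroot, φnone] at h
      rw [h, hb]
    · have : φ i b = some ⟨i, b, hb⟩ := by rw [φsome]
      rw [this, φsome] at h
      exact h
  have tgtne : ∀ i, ∀ e ∈ (G i).E, e.2 ≠ (G i).root := by
    intro i e he h
    obtain ⟨j, _, hj⟩ := (G i).S_edge e he
    rw [h, (G i).S_root] at hj
    exact absurd hj.symm (Finset.insert_ne_empty _ _)
  let SV : V → Finset (Fin N) := fun v =>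
    match v with
    | none => ∅
    | some ⟨i, u⟩ => (G i).S u.1
  have hSV : ∀ i v, SV (φ i v) = (G i).S v := by
    intro i v
    by_cases h : v = (G i).root
    · subst h
      rw [φroot, (G i).S_root]
    · have : φ i v = some ⟨i, v, h⟩ := by rw [φsome]
      rw [this]
  let src : T → V := fun t => φ t.1 t.2.1.1
  let tgt : T → V := fun t => φ t.1 t.2.1.2
  let F : (Fin N → Bool) → Bool := fun z => decide (∃ i, f i z = true)
  let m : (Fin N → Bool) → ℝ := fun y =>
    ((Finset.univ.filter fun i : Fin n => f i y = true).card : ℝ)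
  have hm : ∀ y ∈ Z, (∃ i, f i y = true) → (k : ℝ) ≤ m y := by
    intro y hy h
    exact Nat.cast_le.2 (hcount y hy h)
  let w1 : ∀ i : Fin n, (Fin N → Bool) → Fin (G i).n × Fin (G i).n → ℝ := fun i z e =>
    if ∃ x ∈ Z, F x = false ∧ ∀ l ∈ (G i).S e.2, x l = elg_flip ((G i).S e.1) z l then
      (G i).w (elg_flip ((G i).S e.1) z) false e
    else (G i).w z true e
  have hw1 : ∀ i, ∀ y ∈ Z, f i y = true → ∀ e ∈ (G i).E, w1 i y e = (G i).w y true e := by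
    intro i y hy fy e he
    by_cases h : ∃ x ∈ Z, F x = false ∧ ∀ l ∈ (G i).S e.2, x l = elg_flip ((G i).S e.1) y l
    · simp only [w1, if_pos h]
      obtain ⟨x, hx, Fx, hxl⟩ := h
      obtain ⟨j, hj, hS⟩ := (G i).S_edge e he
      rw [← (G i).w_local x _ false e he hxl]
      have fx : f i x = false := by
        simp only [F, decide_eq_false_iff_not, not_exists, Bool.not_eq_true] at Fx
        exact Fx i
      refine (G i).w_compat x hx y hy fx fy e he ?_ ⟨j, hj, hS, ?_⟩
      · intro l hl
        rw [hxl l (by rw [hS]; exact Finset.mem_insert_of_mem hl)]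
        simp [elg_flip, hl]
      · rw [hxl j (by rw [hS]; exact Finset.mem_insert_self _ _)]
        simp [elg_flip, hj]
    · simp only [w1, if_neg h]
  have hC1pos : ∀ i, ∀ y ∈ Z, f i y = true → 0 < C1 i := by
    intro i y hy fy
    rcases (hC1nonneg i).lt_or_eq with h | h
    · exact h
    · exfalso
      have h1 := hC1 i y hy fy
      rw [← h] at h1
      have hnn : ∀ e ∈ (G i).E, 0 ≤ ((G i).p y e) ^ 2 / (G i).w y true e := fun e _ =>
        div_nonneg (sq_nonneg _) ((G i).w_nonneg _ _ _)
      have h2 : (G i).posComplexity y = 0 := le_antisymm h1 (Finset.sum_nonneg hnn)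
      have h3 := (Finset.sum_eq_zero_iff_of_nonneg hnn).1 h2
      have h4 : ∀ e ∈ (G i).E, (G i).p y e = 0 := by
        intro e he
        rcases div_eq_zero_iff.1 (h3 e he) with h | h
        · exact pow_eq_zero_iff (two_ne_zero) |>.1 h
        · exact (G i).p_zero y hy fy e he h
      have h5 := (G i).p_root y hy fy
      rw [Finset.sum_eq_zero (fun e he => h4 e (Finset.mem_filter.1 he).1),
        Finset.sum_eq_zero (fun e he => h4 e (Finset.mem_filter.1 he).1)] at h5
      norm_num at h5
  let w : (Fin N → Bool) → Bool → T → ℝ := fun z b t =>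
    C1 t.1 / k * (if b = true then w1 t.1 z t.2.1 else (G t.1).w z false t.2.1)
  let p : (Fin N → Bool) → T → ℝ := fun y t =>
    if f t.1 y = true then (G t.1).p y t.2.1 / m y else 0
  have sumT : ∀ A : ∀ i : Fin n, Fin (G i).n × Fin (G i).n → ℝ,
      ∑ t : T, A t.1 t.2.1 = ∑ i, ∑ e ∈ (G i).E, A i e := by
    intro A
    rw [Fintype.sum_sigma]
    refine Finset.sum_congr rfl fun i _ => ?_
    exact Finset.sum_coe_sort (G i).E (A i)
  have sumP : ∀ (q : ∀ i : Fin n, Fin (G i).n × Fin (G i).n → Fin (G i).n) (y : Fin N → Bool)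
      (i : Fin n) (u : {v : Fin (G i).n // v ≠ (G i).root}),
      (elg_sum (fun t : T => φ t.1 (q t.1 t.2.1) = some ⟨i, u⟩) (p y)) =
        if f i y = true then
          (∑ e ∈ (G i).E.filter (fun e => q i e = u.1), (G i).p y e) / m y else 0 := by
    intro q y i u
    have := sumT (fun i' e => if φ i' (q i' e) = some ⟨i, u⟩ then
      (if f i' y = true then (G i').p y e / m y else 0) else 0)
    rw [elg_sum_eq]
    refine this.trans ?_
    rw [Finset.sum_eq_single i]
    · simp only [φsome]
      rw [← Finset.sum_filter]
      split_ifs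
      · rw [Finset.sum_div]
      · simp
    · intro j _ hj
      refine Finset.sum_eq_zero fun e _ => ?_
      rw [if_neg (φne i j _ u hj)]
    · simp
  have sumR : ∀ y, (elg_sum (fun t : T => src t = none) (p y)) =
      ∑ i, if f i y = true then
          (∑ e ∈ (G i).E.filter (fun e => e.1 = (G i).root), (G i).p y e) / m y else 0 := by
    intro y
    have := sumT (fun i' e => if φ i' (e.1) = none then
      (if f i' y = true then (G i').p y e / m y else 0) else 0)
    rw [elg_sum_eq]
    refine this.trans ?_
    refine Finset.sum_congr rfl fun i _ => ?_
    simp only [φnone]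
    rw [← Finset.sum_filter]
    split_ifs
    · rw [Finset.sum_div]
    · simp
  have sumR2 : ∀ y, (elg_sum (fun t : T => tgt t = none) (p y)) = 0 := by
    intro y
    rw [elg_sum_eq]
    refine Finset.sum_eq_zero fun t _ => ?_
    rw [if_neg]
    intro h
    exact tgtne t.1 t.2.1 t.2.2 ((φnone _ _).1 h)
  suffices hb : ∃ H : ExtendedLearningGraph N Z F,
      (∀ x, H.negComplexity x = ∑ t, w x false t) ∧
      (∀ y, H.posComplexity y = ∑ t, (p y t) ^ 2 / w y true t) by
    obtain ⟨H, Hneg, Hpos⟩ := hb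
    refine ⟨H, ?_, ?_⟩
    · intro z hz hf
      rw [Hneg]
      have := sumT (fun i e => C1 i / k * (G i).w z false e)
      have h2 : ∑ t, w z false t = ∑ i, ∑ e ∈ (G i).E, C1 i / k * (G i).w z false e := by
        rw [← this]
        exact Finset.sum_congr rfl fun t _ => by simp [w]
      rw [h2]
      apply le_of_eq
      rw [← mul_assoc, div_mul_div_comm, mul_one, mul_comm (k : ℝ), ← div_div, div_self hn0.ne',
        Finset.mul_sum]
      refine Finset.sum_congr rfl fun i _ => ?_
      rw [← Finset.mul_sum, ExtendedLearningGraph.negComplexity]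
      ring
    · intro z hz hf
      rw [Hpos]
      have hmk := hm z hz hf
      have hm0 : 0 < m z := lt_of_lt_of_le hk0 hmk
      have := sumT (fun i e => if f i z = true then
        (k / (m z) ^ 2 / C1 i) * ((G i).p z e ^ 2 / (G i).w z true e) else 0)
      have h2 : ∑ t, p z t ^ 2 / w z true t = ∑ i, ∑ e ∈ (G i).E, if f i z = true then
        (k / (m z) ^ 2 / C1 i) * ((G i).p z e ^ 2 / (G i).w z true e) else 0 := by
        rw [← this]
        refine Finset.sum_congr rfl fun t _ => ?_
        by_cases h : f t.1 z = true
        · simp only [p, w, if_pos h, if_true]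
          rw [hw1 t.1 z hz h _ t.2.2]
          rw [div_pow, div_div, div_div, div_mul_div_comm, mul_comm (m z ^ 2) (C1 _ / k * _)]
          have := hC1pos t.1 z hz h
          by_cases h0 : (G t.1).w z true t.2.1 = 0
          · simp [h0]
          · field_simp
        · simp [p, h]
      rw [h2]
      calc _ ≤ ∑ i, if f i z = true then k / (m z) ^ 2 else 0 := by
            refine Finset.sum_le_sum fun i _ => ?_
            by_cases h : f i z = true
            · simp only [if_pos h]
              rw [← Finset.mul_sum]
              have hp := hC1pos i z hz h
              have := hC1 i z hz h
              rw [ExtendedLearningGraph.posComplexity] at this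
              calc _ ≤ (k / (m z) ^ 2 / C1 i) * C1 i :=
                    mul_le_mul_of_nonneg_left this
                      (div_nonneg (div_nonneg hk0.le (sq_nonneg _)) hp.le)
                _ = _ := by field_simp
            · simp [h]
        _ = m z * (k / (m z) ^ 2) := by
            rw [← Finset.sum_filter, Finset.sum_const, nsmul_eq_mul]
        _ = k / m z := by field_simp
        _ ≤ 1 := by rw [div_le_one hm0]; exact hmk
  refine elg_build N Z F src tgt ?_ none SV rfl ?_ ?_ w ?_ ?_ ?_ p ?_ ?_ ?_ ?_ ?_
  · rintro ⟨i, e, he⟩ ⟨j, e', he'⟩ h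
    simp only [src, tgt, Prod.mk.injEq] at h
    have h2 : φ j e'.2 = some ⟨j, e'.2, tgtne j e' he'⟩ := by rw [φsome]
    by_cases hij : i = j
    · subst hij
      have := Prod.ext (φinj i h.1) (φinj i h.2)
      subst this
      rfl
    · exact absurd (h.2.trans h2) (φne j i _ _ hij)
  · rintro ⟨i, e, he⟩
    simp only [src, tgt, hSV]
    exact (G i).S_edge e he
  · have key : ∀ i v, Relation.ReflTransGen (fun u v => ∃ t, src t = u ∧ tgt t = v) none (φ i v) := by
      intro i v
      have := ((G i).reach v).lift (p := fun u v => ∃ t, src t = u ∧ tgt t = v) (φ i) (by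
        intro a b hab
        exact ⟨⟨i, (a, b), hab⟩, rfl, rfl⟩)
      have h' : Relation.ReflTransGen (fun u v => ∃ t, src t = u ∧ tgt t = v)
          (φ i (G i).root) (φ i v) := this
      rwa [φroot] at h'
    intro v
    rcases v with _ | ⟨i, u⟩
    · exact Relation.ReflTransGen.refl
    · have := key i u.1
      rwa [(φsome i u.1 u).2 rfl] at this
  · intro z b t
    have : 0 ≤ C1 t.1 / k := div_nonneg (hC1nonneg _) hk0.le
    refine mul_nonneg this ?_
    simp only [w1]
    split_ifs <;> exact (G t.1).w_nonneg _ _ _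
  · rintro z z' b ⟨i, e, he⟩ h
    simp only [tgt, hSV] at h
    have hfl : ∀ l ∈ (G i).S e.2, elg_flip ((G i).S e.1) z l = elg_flip ((G i).S e.1) z' l := by
      intro l hl
      simp [elg_flip, h l hl]
    simp only [w]
    congr 1
    split_ifs
    · have hiff : (∃ x ∈ Z, F x = false ∧ ∀ l ∈ (G i).S e.2, x l = elg_flip ((G i).S e.1) z l) ↔
          (∃ x ∈ Z, F x = false ∧ ∀ l ∈ (G i).S e.2, x l = elg_flip ((G i).S e.1) z' l) := by
        constructor
        · rintro ⟨x, hx, Fx, hl⟩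
          exact ⟨x, hx, Fx, fun l hl' => (hl l hl').trans (hfl l hl')⟩
        · rintro ⟨x, hx, Fx, hl⟩
          exact ⟨x, hx, Fx, fun l hl' => (hl l hl').trans (hfl l hl').symm⟩
      simp only [w1]
      rw [(G i).w_local _ _ false e he hfl, (G i).w_local _ _ true e he h]
      exact if_congr hiff rfl rfl
    · exact (G i).w_local _ _ false e he h
  · rintro x hx y hy fx fy ⟨i, e, he⟩ h1 ⟨j, hj, hS, hxy⟩
    simp only [src, tgt, hSV] at h1 hj hS
    have hxl : ∀ l ∈ (G i).S e.2, x l = elg_flip ((G i).S e.1) y l := by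
      intro l hl
      rw [hS, Finset.mem_insert] at hl
      rcases hl with rfl | hl
      · simp only [elg_flip, if_neg hj]
        exact elg_bool _ _ hxy
      · simp only [elg_flip, if_pos hl]
        exact h1 l hl
    have hw : w1 i y e = (G i).w x false e := by
      simp only [w1]
      rw [if_pos ⟨x, hx, fx, hxl⟩, (G i).w_local _ _ false e he hxl]
    show C1 i / k * (G i).w x false e = C1 i / k * w1 i y e
    rw [hw]
  · intro y t
    simp only [p]
    split_ifs
    · exact div_nonneg ((G t.1).p_nonneg _ _) (Nat.cast_nonneg _)
    · exact le_rfl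
  · intro y hy fy
    rw [sumR, sumR2, sub_zero]
    have hf : ∃ i, f i y = true := of_decide_eq_true fy
    have hm0 : 0 < m y := lt_of_lt_of_le hk0 (hm y hy hf)
    calc _ = ∑ i, if f i y = true then 1 / m y else 0 := by
          refine Finset.sum_congr rfl fun i _ => ?_
          by_cases h : f i y = true
          · simp only [if_pos h]
            have h1 := (G i).p_root y hy h
            have h2 : (∑ e ∈ (G i).E.filter fun e => e.2 = (G i).root, (G i).p y e) = 0 := by
              refine Finset.sum_eq_zero fun e he => ?_
              exact absurd (Finset.mem_filter.1 he).2 (tgtne i e (Finset.mem_filter.1 he).1)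
            rw [h2, sub_zero] at h1
            rw [h1]
          · simp [h]
      _ = m y * (1 / m y) := by
          rw [← Finset.sum_filter, Finset.sum_const, nsmul_eq_mul]
      _ = 1 := by field_simp
  · intro y hy fy v hv
    rcases v with _ | ⟨i, u⟩
    · exact absurd rfl hv
    · have e1 := sumP (fun _ e => e.1) y i u
      have e2 := sumP (fun _ e => e.2) y i u
      simp only [src, tgt]
      rw [e1, e2]
      split_ifs with h
      · intro hne
        rw [(G i).p_conserve y hy h u.1 u.2 (fun h0 => hne (by rw [h0, zero_div]))]
      · simp
  · intro y hy fy v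
    have hf : ∃ i, f i y = true := of_decide_eq_true fy
    have hm0 : 0 < m y := lt_of_lt_of_le hk0 (hm y hy hf)
    rcases v with _ | ⟨i, u⟩
    · intro h
      exact absurd (sumR2 y) h
    · have e1 := sumP (fun _ e => e.1) y i u
      have e2 := sumP (fun _ e => e.2) y i u
      simp only [src, tgt]
      rw [e1, e2]
      split_ifs with h
      · intro h1 h2 z hz hzl
        have := (G i).p_sink_cert y hy h u.1 (fun h0 => h1 (by rw [h0, zero_div]))
          ((div_eq_zero_iff.1 h2).resolve_right hm0.ne') z hz hzl
        exact decide_eq_true ⟨i, this⟩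
      · simp
  · rintro y hy fy ⟨i, e, he⟩ h0
    simp only [p]
    split_ifs with h
    · simp only [w, if_true] at h0
      rw [hw1 i y hy h e he] at h0
      rcases mul_eq_zero.1 h0 with h0 | h0
      · exact absurd h0 (div_pos (hC1pos i y hy h) hk0).ne'
      · rw [(G i).p_zero y hy h e he h0, zero_div]
    · rfl
end

section
/- Let N ≥ 1 be an integer and let z ∈ {0,1}^N. For j ∈ {1, …, N} let s_j denote the number of indices i < j with z_i = 1, and let k denote the Hamming weight of z. Then: (i) Σ_{j : z_j = 0} 3·(s_j + 1)·ln(N+1) + Σ_{j : z_j = 1} 3·N·ln(N+1) ≤ 6·N·(k+1)·ln(N+1); and (ii) Σ_{j : z_j = 0} 1/(3·N·ln(N+1)) + Σ_{j : z_j = 1} 1/(3·(s_j + 1)·ln(N+1)) ≤ 1. -/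
/-- Let `N ≥ 1` and `z ∈ {0,1}^N`.  For `j ∈ [N]`, let `s j`
be the number of indices `i < j` with `z i = 1`, and let `k` be the Hamming
weight of `z`.  Then
(i) `Σ_{j : z_j = 0} 3·(s_j+1)·ln(N+1) + Σ_{j : z_j = 1} 3·N·ln(N+1)
      ≤ 6·N·(k+1)·ln(N+1)`, and
(ii) `Σ_{j : z_j = 0} 1/(3·N·ln(N+1)) + Σ_{j : z_j = 1} 1/(3·(s_j+1)·ln(N+1)) ≤ 1`. -/
theorem stmt_2 (N : ℕ) (hN : 1 ≤ N) (z : Fin N → Bool)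
    (s : Fin N → ℕ)
    (hs : ∀ j, s j = (Finset.univ.filter fun i : Fin N => i < j ∧ z i = true).card)
    (k : ℕ) (hk : k = (Finset.univ.filter fun j : Fin N => z j = true).card) :
    ((∑ j ∈ Finset.univ.filter (fun j : Fin N => z j = false),
          3 * ((s j : ℝ) + 1) * Real.log (N + 1))
        + (∑ j ∈ Finset.univ.filter (fun j : Fin N => z j = true),
          3 * (N : ℝ) * Real.log (N + 1))
      ≤ 6 * (N : ℝ) * ((k : ℝ) + 1) * Real.log (N + 1)) ∧
    ((∑ j ∈ Finset.univ.filter (fun j : Fin N => z j = false),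
          1 / (3 * (N : ℝ) * Real.log (N + 1)))
        + (∑ j ∈ Finset.univ.filter (fun j : Fin N => z j = true),
          1 / (3 * ((s j : ℝ) + 1) * Real.log (N + 1)))
      ≤ 1) := by
  have hlog2 := Real.log_two_gt_d9
  have hN' : (1 : ℝ) ≤ N := by exact_mod_cast hN
  have hL2 : Real.log 2 ≤ Real.log (N + 1) := Real.log_le_log (by norm_num) (by linarith)
  have hLN : Real.log N ≤ Real.log (N + 1) := Real.log_le_log (by linarith) (by linarith)
  generalize Real.log ((N : ℝ) + 1) = L at *
  have hL : 0 < L := by linarith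
  set T := Finset.univ.filter (fun j : Fin N => z j = true) with hT
  set F := Finset.univ.filter (fun j : Fin N => z j = false) with hF
  have hcard : T.card + F.card = N := by
    have h := Finset.card_filter_add_card_filter_not (s := (Finset.univ : Finset (Fin N)))
      (fun j => z j = true)
    simpa [hT, hF] using h
  have hFc : (F.card : ℝ) = N - k := by
    have h : (T.card : ℝ) + F.card = N := by exact_mod_cast hcard
    rw [hk]; linarith
  have hkN : k ≤ N := by omega
  have hkN' : (k : ℝ) ≤ N := by exact_mod_cast hkN
  have hsk : ∀ j, s j ≤ k := by
    intro j
    rw [hs, hk]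
    apply Finset.card_le_card
    intro i hi
    simp only [hT, Finset.mem_filter] at hi ⊢
    exact ⟨hi.1, hi.2.2⟩
  have hlt : ∀ i ∈ T, ∀ j, i < j → s i < s j := by
    intro i hi j hij
    rw [hs, hs]
    apply Finset.card_lt_card
    rw [Finset.ssubset_iff_of_subset]
    · refine ⟨i, ?_, ?_⟩
      · simp only [hT, Finset.mem_filter] at hi ⊢
        exact ⟨hi.1, hij, hi.2⟩
      · simp
    · intro a ha
      simp only [Finset.mem_filter] at ha ⊢
      exact ⟨ha.1, ha.2.1.trans hij, ha.2.2⟩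
  have hsk' : ∀ j ∈ T, s j < k := by
    intro j hj
    rw [hs, hk]
    apply Finset.card_lt_card
    rw [Finset.ssubset_iff_of_subset]
    · exact ⟨j, hj, by simp⟩
    · intro a ha
      simp only [hT, Finset.mem_filter] at ha ⊢
      exact ⟨ha.1, ha.2.2⟩
  have hinj : Set.InjOn s T := by
    intro i hi j hj hij
    rcases lt_trichotomy i j with h | h | h
    · exact absurd hij (hlt i hi j h).ne
    · exact h
    · exact absurd hij (hlt j hj i h).ne'
  constructor
  · have h1 : ∑ j ∈ F, 3 * ((s j : ℝ) + 1) * L ≤ ∑ j ∈ F, 3 * ((k : ℝ) + 1) * L := by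
      apply Finset.sum_le_sum
      intro j _
      have : (s j : ℝ) ≤ k := by exact_mod_cast hsk j
      gcongr
    rw [Finset.sum_const, nsmul_eq_mul, hFc] at h1
    rw [Finset.sum_const, nsmul_eq_mul, ← hk]
    have hk0 : (0 : ℝ) ≤ k := by positivity
    have h2 : 0 ≤ L * (3 * N + 3 * (k * (k + 1))) := by positivity
    nlinarith
  · have h1 : ∑ j ∈ T, 1 / (3 * ((s j : ℝ) + 1) * L)
        ≤ ∑ i ∈ Finset.range k, 1 / (3 * ((i : ℝ) + 1) * L) := by
      rw [← Finset.sum_image (f := fun i : ℕ => 1 / (3 * ((i : ℝ) + 1) * L)) hinj]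
      apply Finset.sum_le_sum_of_subset_of_nonneg
      · intro a ha
        obtain ⟨j, hj, rfl⟩ := Finset.mem_image.1 ha
        exact Finset.mem_range.2 (hsk' j hj)
      · intro i _ _
        positivity
    have h2 : ∑ j ∈ F, 1 / (3 * (N : ℝ) * L)
        ≤ ∑ i ∈ Finset.Ico k N, 1 / (3 * ((i : ℝ) + 1) * L) := by
      have h3 : ∑ i ∈ Finset.Ico k N, 1 / (3 * (N : ℝ) * L)
          ≤ ∑ i ∈ Finset.Ico k N, 1 / (3 * ((i : ℝ) + 1) * L) := by
        apply Finset.sum_le_sum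
        intro i hi
        have : (i : ℝ) + 1 ≤ N := by exact_mod_cast (Finset.mem_Ico.1 hi).2
        gcongr
      refine le_trans (le_of_eq ?_) h3
      rw [Finset.sum_const, Finset.sum_const, Nat.card_Ico]
      congr 1
      omega
    have h4 := Finset.sum_range_add_sum_Ico (fun i : ℕ => 1 / (3 * ((i : ℝ) + 1) * L)) hkN
    have h5 : ∑ i ∈ Finset.range N, 1 / (3 * ((i : ℝ) + 1) * L) = (harmonic N : ℝ) / (3 * L) := by
      rw [harmonic, Rat.cast_sum, Finset.sum_div]
      apply Finset.sum_congr rfl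
      intro i _
      push_cast
      field_simp
    have h6 := harmonic_le_one_add_log N
    have h7 : (harmonic N : ℝ) / (3 * L) ≤ 1 := by
      rw [div_le_one (by positivity)]
      linarith
    linarith
end

section
/- Let x and b be positive integers, let G be a simple graph on a finite vertex set V with |V| = n and x ≤ n, and let B ⊆ V with |B| = b. For X ⊆ V and w ∈ V, let Δ(X, B, w) = {(u, v) ∈ B × B : both u and v are adjacent to w, and no vertex of X is adjacent to both u and v}. Then the average of |Δ(X, B, w)| over all x-element subsets X ⊆ V (uniformly) and all vertices w ∈ V (uniformly) is at most b²/x; equivalently, Σ_{X ⊆ V, |X| = x} Σ_{w ∈ V} |Δ(X, B, w)| ≤ (b²/x) · n · C(n, x). -/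
theorem aux_num (n k x : ℕ) (hk : k ≤ n) : x * (k * (n - k).choose x) ≤ n * n.choose x := by
  have h1 : k * (n - k).choose x ≤ n.choose (x + 1) := by
    have h := Nat.add_choose_eq k (n - k) (x + 1)
    rw [Nat.add_sub_cancel' hk] at h
    rw [h]
    have := Finset.single_le_sum (s := Finset.HasAntidiagonal.antidiagonal (x + 1))
      (f := fun ij : ℕ × ℕ => k.choose ij.1 * (n - k).choose ij.2)
      (fun _ _ => Nat.zero_le _) (a := (1, x)) (by simp [add_comm])
    simpa using this
  have h2 := Nat.choose_succ_right_eq n x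
  calc x * (k * (n - k).choose x) ≤ (x + 1) * n.choose (x + 1) := Nat.mul_le_mul (by omega) h1
    _ = n.choose x * (n - x) := by rw [mul_comm, h2]
    _ ≤ n.choose x * n := Nat.mul_le_mul_left _ (Nat.sub_le _ _)
    _ = _ := mul_comm _ _

theorem aux_pair {V : Type*} [Fintype V] [DecidableEq V] (x : ℕ) (P : V → Prop)
    [DecidablePred P] :
    x * (∑ X ∈ Finset.powersetCard x (Finset.univ : Finset V), ∑ w : V,
      if P w ∧ ∀ s ∈ X, ¬ P s then 1 else 0) ≤
      Fintype.card V * (Fintype.card V).choose x := by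
  set N := Finset.univ.filter P with hN
  have hk : N.card ≤ Fintype.card V := Finset.card_le_univ N
  refine le_trans (le_of_eq ?_) (aux_num (Fintype.card V) N.card x hk)
  congr 1
  have h1 : ∀ X : Finset V, (∑ w : V, if P w ∧ ∀ s ∈ X, ¬ P s then 1 else 0)
      = if ∀ s ∈ X, ¬ P s then N.card else 0 := by
    intro X
    by_cases h : ∀ s ∈ X, ¬ P s
    · rw [if_pos h, hN, Finset.card_filter]
      exact Finset.sum_congr rfl fun w _ => if_congr (and_iff_left h) rfl rfl
    · rw [if_neg h]
      exact Finset.sum_eq_zero fun w _ => if_neg fun hh => h hh.2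
  rw [Finset.sum_congr rfl fun X _ => h1 X, ← Finset.sum_filter, Finset.sum_const, smul_eq_mul,
    mul_comm]
  congr 1
  rw [← Finset.card_compl, ← Finset.card_powersetCard]
  congr 1
  ext X
  simp only [Finset.mem_filter, Finset.mem_powersetCard, Finset.subset_univ, true_and,
    Finset.subset_iff, Finset.mem_compl, hN, Finset.mem_univ]
  tauto

/-- Let `G` be a simple graph on a finite vertex set `V` with
`|V| = n`, let `x, b` be positive integers with `x ≤ n`, and let `B ⊆ V` with
`|B| = b`.  For `X ⊆ V` and `w ∈ V`, let
`Δ(X, B, w) = {(u,v) ∈ B × B : w` is adjacent to both `u` and `v`, and no vertex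
of `X` is adjacent to both `u` and `v}`.  Then
`Σ_{X ⊆ V, |X| = x} Σ_{w ∈ V} |Δ(X, B, w)| ≤ (b²/x) · n · C(n, x)`. -/
theorem stmt_3 {V : Type*} [Fintype V] [DecidableEq V]
    (G : SimpleGraph V) [DecidableRel G.Adj]
    (n x b : ℕ) (hn : Fintype.card V = n) (hx : 0 < x) (hb : 0 < b) (hxn : x ≤ n)
    (B : Finset V) (hB : B.card = b) :
    ∑ X ∈ Finset.powersetCard x (Finset.univ : Finset V), ∑ w : V,
        (((B ×ˢ B).filter fun uv =>
            G.Adj w uv.1 ∧ G.Adj w uv.2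
              ∧ ∀ s ∈ X, ¬(G.Adj s uv.1 ∧ G.Adj s uv.2)).card : ℝ)
      ≤ ((b : ℝ) ^ 2 / x) * n * n.choose x := by
  subst hn hB
  have hx' : (0 : ℝ) < x := by exact_mod_cast hx
  rw [div_mul_eq_mul_div, div_mul_eq_mul_div, le_div_iff₀ hx']
  norm_cast
  simp only [Finset.card_filter]
  have h : ∑ X ∈ Finset.powersetCard x (Finset.univ : Finset V), ∑ w : V,
      ∑ uv ∈ B ×ˢ B, (if G.Adj w uv.1 ∧ G.Adj w uv.2
              ∧ ∀ s ∈ X, ¬(G.Adj s uv.1 ∧ G.Adj s uv.2) then 1 else 0)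
      = ∑ uv ∈ B ×ˢ B, ∑ X ∈ Finset.powersetCard x (Finset.univ : Finset V), ∑ w : V,
        (if (G.Adj w uv.1 ∧ G.Adj w uv.2)
              ∧ ∀ s ∈ X, ¬(G.Adj s uv.1 ∧ G.Adj s uv.2) then 1 else 0) := by
    simp only [and_assoc]
    rw [Finset.sum_comm (s := B ×ˢ B)]
    exact Finset.sum_congr rfl fun X _ => Finset.sum_comm
  rw [h, mul_comm, Finset.mul_sum]
  refine (Finset.sum_le_card_nsmul _ _ _ fun uv _ =>
    aux_pair x (fun w => G.Adj w uv.1 ∧ G.Adj w uv.2)).trans (le_of_eq ?_)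
  rw [Finset.card_product, smul_eq_mul]
  ring
end

section
/- Let V₁ be a finite set with |V₁| = n, let N ⊆ V₁ with |N| = t, and let 1 ≤ x ≤ n be an integer such that x·t ≥ n. Then the average of |N ∩ X|² over all x-element subsets X of V₁ is at most 2·(x·t/n)². -/
theorem count_bd1 {α : Type*} [DecidableEq α] (V : Finset α) (x : ℕ) (hx : 1 ≤ x) (hx2 : x ≤ V.card)
    (a : α) (ha : a ∈ V) :
    (((V.powersetCard x).filter (fun X => a ∈ X)).card : ℝ) = (V.card.choose x) * ((x:ℝ) / V.card) := by
  have h := Finset.card_filter_powersetCard_subset {a} V x (by simpa using ha) (by simpa using hx)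
  simp only [Finset.singleton_subset_iff, Finset.card_singleton] at h
  rw [h]
  obtain ⟨y, rfl⟩ : ∃ y, x = y + 1 := ⟨x - 1, by omega⟩
  obtain ⟨m, hm⟩ : ∃ m, V.card = m + 1 := ⟨V.card - 1, by omega⟩
  rw [hm]
  have h2 := Nat.add_one_mul_choose_eq m y
  have h3 : ((m:ℝ)+1) * (m.choose y) = ((m+1).choose (y+1)) * ((y:ℝ)+1) := by exact_mod_cast h2
  simp only [Nat.add_sub_cancel]
  push_cast
  have : (m:ℝ)+1 ≠ 0 := by positivity
  field_simp
  linarith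

theorem count_bd2 {α : Type*} [DecidableEq α] (V : Finset α) (x : ℕ) (hx : 1 ≤ x) (hx2 : x ≤ V.card)
    (a b : α) (ha : a ∈ V) (hb : b ∈ V) (hab : a ≠ b) :
    (((V.powersetCard x).filter (fun X => a ∈ X ∧ b ∈ X)).card : ℝ)
      ≤ (V.card.choose x) * ((x:ℝ) / V.card) ^ 2 := by
  have hc : ({a, b} : Finset α).card = 2 := Finset.card_pair hab
  have hs : ({a, b} : Finset α) ⊆ V := by
    intro z; simp; rintro (rfl | rfl) <;> assumption
  rcases Nat.lt_or_ge x 2 with h1 | h1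
  · have : ((V.powersetCard x).filter (fun X => a ∈ X ∧ b ∈ X)) = ∅ := by
      apply Finset.filter_eq_empty_iff.2
      rintro X hX ⟨h3, h4⟩
      have : ({a, b} : Finset α) ⊆ X := by
        intro z; simp; rintro (rfl | rfl) <;> assumption
      have := Finset.card_le_card this
      have := (Finset.mem_powersetCard.1 hX).2
      omega
    rw [this]; simp; positivity
  have h := Finset.card_filter_powersetCard_subset {a, b} V x hs (by omega)
  simp only [Finset.insert_subset_iff, Finset.singleton_subset_iff, hc] at h
  rw [h]
  obtain ⟨y, rfl⟩ : ∃ y, x = y + 2 := ⟨x - 2, by omega⟩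
  obtain ⟨m, hm⟩ : ∃ m, V.card = m + 2 := ⟨V.card - 2, by omega⟩
  rw [hm] at hx2 ⊢
  have h2 : ((m:ℝ)+1) * (m.choose y) = ((m+1).choose (y+1)) * ((y:ℝ)+1) := by
    exact_mod_cast Nat.add_one_mul_choose_eq m y
  have h3 : ((m:ℝ)+2) * ((m+1).choose (y+1)) = ((m+2).choose (y+2)) * ((y:ℝ)+2) := by
    exact_mod_cast Nat.add_one_mul_choose_eq (m+1) (y+1)
  have hym : (y:ℝ) ≤ m := by exact_mod_cast (by omega : y ≤ m)
  simp only [Nat.add_sub_cancel]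
  push_cast
  have e : (m.choose y : ℝ) = ((m+2).choose (y+2)) * (((y:ℝ)+2)/(m+2) * ((y+1)/(m+1))) := by
    field_simp
    linear_combination ((m:ℝ)+2) * h2 + ((y:ℝ)+1) * h3
  rw [e, sq]
  gcongr ?_ * (?_ * ?_)
  rw [div_le_div_iff₀ (by positivity) (by positivity)]
  nlinarith

/-- Let `V₁` be a finite set with `|V₁| = n`, let `N ⊆ V₁` with
`|N| = t`, and let `1 ≤ x ≤ n` be such that `x·t ≥ n`.  Then the average of
`|N ∩ X|²` over all `x`-element subsets `X ⊆ V₁` is at most `2·(x·t/n)²`. -/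
theorem stmt_7 {α : Type*} [DecidableEq α] (V1 N : Finset α) (hN : N ⊆ V1)
    (n t x : ℕ) (hn : V1.card = n) (ht : N.card = t)
    (hx1 : 1 ≤ x) (hx2 : x ≤ n) (hxt : n ≤ x * t) :
    (∑ X ∈ V1.powersetCard x, ((N ∩ X).card : ℝ) ^ 2) / (n.choose x)
      ≤ 2 * (((x : ℝ) * t) / n) ^ 2 := by
  subst hn ht
  have hC : (0:ℝ) < (V1.card.choose x) := by exact_mod_cast Nat.choose_pos hx2
  have hn0 : (0:ℝ) < V1.card := by exact_mod_cast (by omega : 0 < V1.card)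
  have key : ∑ X ∈ V1.powersetCard x, ((N ∩ X).card : ℝ) ^ 2 =
      ∑ a ∈ N, ∑ b ∈ N, (((V1.powersetCard x).filter (fun X => a ∈ X ∧ b ∈ X)).card : ℝ) := by
    have h1 : ∀ X : Finset α, ((N ∩ X).card : ℝ) = ∑ a ∈ N, if a ∈ X then (1:ℝ) else 0 := by
      intro X
      rw [Finset.sum_boole, Finset.filter_mem_eq_inter]
    simp_rw [h1, sq, Finset.sum_mul_sum]
    rw [Finset.sum_comm]
    refine Finset.sum_congr rfl fun a _ => ?_
    rw [Finset.sum_comm]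
    refine Finset.sum_congr rfl fun b _ => ?_
    rw [← Finset.sum_boole]
    refine Finset.sum_congr rfl fun X _ => ?_
    by_cases h : a ∈ X <;> by_cases h' : b ∈ X <;> simp [h, h']
  set C : ℝ := ((V1.card.choose x : ℕ) : ℝ) with hCdef
  set p : ℝ := (x:ℝ) / V1.card with hp
  have bd : ∀ a ∈ N, ∀ b ∈ N,
      (((V1.powersetCard x).filter (fun X => a ∈ X ∧ b ∈ X)).card : ℝ)
        ≤ C * p ^ 2 + if a = b then C * p else 0 := by
    intro a ha b hb
    by_cases hab : a = b
    · subst hab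
      have := count_bd1 V1 x hx1 hx2 a (hN ha)
      simp only [and_self, if_true]
      rw [this]
      have : 0 ≤ C * p ^ 2 := by positivity
      linarith
    · simpa [hab] using count_bd2 V1 x hx1 hx2 a b (hN ha) (hN hb) hab
  have tot := Finset.sum_le_sum fun a ha => Finset.sum_le_sum (bd a ha)
  rw [← key] at tot
  simp [Finset.sum_add_distrib] at tot
  rw [div_le_iff₀ hC]
  have hmu : 1 ≤ p * N.card := by
    rw [hp, div_mul_eq_mul_div, le_div_iff₀ hn0]
    exact_mod_cast (by omega : 1 * V1.card ≤ x * N.card)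
  have e : (x:ℝ) * N.card / V1.card = p * N.card := by rw [hp]; ring
  rw [e]
  refine tot.trans ?_
  have : 0 ≤ C * ((p * N.card) * (p * N.card - 1)) :=
    mul_nonneg hC.le (mul_nonneg (by linarith) (by linarith))
  nlinarith
end
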